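/- Desargues' theorem, non-coplanar configuration. Let rk be a rank function satisfying (A1)–(A4) and rk X ≤ 4 for every finite set X. Let O, A, B, C, A', B', C', α, β, γ be points such that: rk{A,B,C} = 3 and rk{A',B',C'} = 3 (two nondegenerate triangles); rk{A,B,C,A',B',C'} = 4 (the triangles are not coplanar); the triangles are in perspective from O, i.e. rk{O,A,A'} = 2, rk{O,B,B'} = 2, rk{O,C,C'} = 2, with rk{O,A} = 2, rk{O,B} = 2, rk{O,C} = 2, rk{O,A'} = 2, rk{O,B'} = 2, rk{O,C'} = 2, rk{A,A'} = 2, rk{B,B'} = 2, rk{C,C'} = 2; and the corresponding sides meet in α, β, γ, i.e. rk{B,C,α} = 2 and rk{B',C',α} = 2, rk{A,C,β} = 2 and rk{A',C',β} = 2, rk{A,B,γ} = 2 and rk{A',B',γ} = 2. Then rk{α,β,γ} ≤ 2, i.e. the three points α, β, γ are collinear. -/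

import Mathlib

/-!
The points `α`, `β`, `γ` lie on the sides of both triangles, hence in both planes `ABC` and
`A'B'C'`. Each plane has rank 3 and together they have rank at least 4, so by submodularity
their common points have rank at most `3 + 3 - 4 = 2`.
-/

section Submodular

variable {L M : Type*} [Lattice L] [Add M] [Preorder M] {f : L → M}

/-- Submodularity of a function on a lattice; for finite sets ordered by inclusion this is the
axiom (A3) of rank functions. -/
def IsSubmodular (f : L → M) : Prop :=
  ∀ x y, f (x ⊔ y) + f (x ⊓ y) ≤ f x + f y

theorem IsSubmodular.add_le_add_of_le [AddLeftMono M] [AddRightMono M] (hsub : IsSubmodular f)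
    (hmono : Monotone f) {x y u v : L} (hu : u ≤ x ⊔ y) (hv : v ≤ x ⊓ y) :
    f u + f v ≤ f x + f y :=
  (add_le_add (hmono hu) (hmono hv)).trans (hsub x y)

end Submodular

section RankFunction

variable {Pt : Type*} [DecidableEq Pt] {rk : Finset Pt → ℕ}

/-- The flat spanned by a finite set `S` of points: all points that can be added to `S` without
increasing its rank. For `S = {P, Q}` with `P ≠ Q` it is the line `PQ`. -/
def flatSpan (rk : Finset Pt → ℕ) (S : Finset Pt) : Set Pt :=
  {p | rk (insert p S) ≤ rk S}

theorem flatSpan_mono (hmono : Monotone rk) (hsub : IsSubmodular rk) {S T : Finset Pt}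
    (hST : S ⊆ T) : flatSpan rk S ⊆ flatSpan rk T := by
  intro p (hp : rk (insert p S) ≤ rk S)
  have hsum : rk (insert p T) + rk S ≤ rk T + rk (insert p S) :=
    hsub.add_le_add_of_le hmono (by grind) (by grind)
  change rk (insert p T) ≤ rk T
  omega

theorem rk_union_le_of_subset_flatSpan (hmono : Monotone rk) (hsub : IsSubmodular rk)
    {S T : Finset Pt} (hT : (T : Set Pt) ⊆ flatSpan rk S) : rk (S ∪ T) ≤ rk S := by
  induction T using Finset.induction_on with
  | empty => rw [Finset.union_empty]
  | insert p T _ ih =>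
    rw [Finset.coe_insert, Set.insert_subset_iff] at hT
    have hp : p ∈ flatSpan rk (S ∪ T) :=
      flatSpan_mono hmono hsub Finset.subset_union_left hT.1
    rw [Finset.union_insert]
    exact le_trans hp (ih hT.2)

theorem rk_insert_le_add_one (hsub : IsSubmodular rk) (hpt : ∀ p, rk {p} ≤ 1)
    (p : Pt) (S : Finset Pt) : rk (insert p S) ≤ rk S + 1 := by
  have hsum : rk (insert p S) + rk ({p} ∩ S) ≤ rk {p} + rk S := hsub {p} S
  have hp := hpt p
  omega

theorem mem_flatSpan_pair_of_rk_le_two (hsub : IsSubmodular rk) (hpt : ∀ p, rk {p} ≤ 1)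
    {P Q R S : Pt} (hPQR : 3 ≤ rk {P, Q, R})
    (hS : rk {Q, R, S} ≤ 2) : S ∈ flatSpan rk {Q, R} := by
  have hQR : 3 ≤ rk {Q, R} + 1 := hPQR.trans (rk_insert_le_add_one hsub hpt P {Q, R})
  have hperm : ({S, Q, R} : Finset Pt) = {Q, R, S} := by grind
  change rk {S, Q, R} ≤ rk {Q, R}
  rw [hperm]
  omega

theorem rk_triangle_union_sides_le (hmono : Monotone rk) (hsub : IsSubmodular rk)
    (hpt : ∀ p, rk {p} ≤ 1) {A B C α β γ : Pt} (hABC : 3 ≤ rk {A, B, C})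
    (hα : rk {B, C, α} ≤ 2) (hβ : rk {A, C, β} ≤ 2) (hγ : rk {A, B, γ} ≤ 2) :
    rk ({A, B, C} ∪ {α, β, γ}) ≤ rk {A, B, C} := by
  have hBAC : ({B, A, C} : Finset Pt) = {A, B, C} := by grind
  have hCAB : ({C, A, B} : Finset Pt) = {A, B, C} := by grind
  have hα_line : α ∈ flatSpan rk {B, C} := mem_flatSpan_pair_of_rk_le_two hsub hpt hABC hα
  have hβ_line : β ∈ flatSpan rk {A, C} :=
    mem_flatSpan_pair_of_rk_le_two hsub hpt (hBAC ▸ hABC) hβ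
  have hγ_line : γ ∈ flatSpan rk {A, B} :=
    mem_flatSpan_pair_of_rk_le_two hsub hpt (hCAB ▸ hABC) hγ
  apply rk_union_le_of_subset_flatSpan hmono hsub
  simp only [Finset.coe_insert, Finset.coe_singleton, Set.insert_subset_iff,
    Set.singleton_subset_iff]
  exact ⟨flatSpan_mono hmono hsub (by grind) hα_line,
    flatSpan_mono hmono hsub (by grind) hβ_line,
    flatSpan_mono hmono hsub (by grind) hγ_line⟩

theorem stmt_9_general (hmono : Monotone rk) (hsub : IsSubmodular rk) (hpt : ∀ p, rk {p} ≤ 1)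
    {A B C A' B' C' α β γ : Pt} (hABC : rk {A, B, C} = 3) (hA'B'C' : rk {A', B', C'} = 3)
    (hncop : 4 ≤ rk {A, B, C, A', B', C'})
    (hα : rk {B, C, α} ≤ 2) (hα' : rk {B', C', α} ≤ 2)
    (hβ : rk {A, C, β} ≤ 2) (hβ' : rk {A', C', β} ≤ 2)
    (hγ : rk {A, B, γ} ≤ 2) (hγ' : rk {A', B', γ} ≤ 2) :
    rk {α, β, γ} ≤ 2 := by
  have hplane := rk_triangle_union_sides_le hmono hsub hpt hABC.ge hα hβ hγ
  have hplane' := rk_triangle_union_sides_le hmono hsub hpt hA'B'C'.ge hα' hβ' hγ'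
  have hmeet : rk {A, B, C, A', B', C'} + rk {α, β, γ} ≤
      rk ({A, B, C} ∪ {α, β, γ}) + rk ({A', B', C'} ∪ {α, β, γ}) :=
    hsub.add_le_add_of_le hmono (by grind) (by grind)
  omega

end RankFunction

/-- Desargues' theorem, non-coplanar configuration: two triangles
in perspective from a point O, not coplanar, have their corresponding sides
meeting in three collinear points α, β, γ. -/
theorem stmt_9 {Pt : Type*} [DecidableEq Pt] (rk : Finset Pt → ℕ)
    (hA1 : ∀ X : Finset Pt, rk X ≤ X.card)
    (hA2 : ∀ X Y : Finset Pt, X ⊆ Y → rk X ≤ rk Y)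
    (hA3 : ∀ X Y : Finset Pt, rk (X ∪ Y) + rk (X ∩ Y) ≤ rk X + rk Y)
    (hA4 : ∀ p : Pt, rk {p} = 1)
    (hA9 : ∀ X : Finset Pt, rk X ≤ 4)
    (O A B C A' B' C' α β γ : Pt)
    (hABC : rk {A, B, C} = 3)
    (hA'B'C' : rk {A', B', C'} = 3)
    (hncop : rk {A, B, C, A', B', C'} = 4)
    (hOAA' : rk {O, A, A'} = 2) (hOBB' : rk {O, B, B'} = 2) (hOCC' : rk {O, C, C'} = 2)
    (hOA : rk {O, A} = 2) (hOB : rk {O, B} = 2) (hOC : rk {O, C} = 2)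
    (hOA' : rk {O, A'} = 2) (hOB' : rk {O, B'} = 2) (hOC' : rk {O, C'} = 2)
    (hAA' : rk {A, A'} = 2) (hBB' : rk {B, B'} = 2) (hCC' : rk {C, C'} = 2)
    (hα : rk {B, C, α} = 2) (hα' : rk {B', C', α} = 2)
    (hβ : rk {A, C, β} = 2) (hβ' : rk {A', C', β} = 2)
    (hγ : rk {A, B, γ} = 2) (hγ' : rk {A', B', γ} = 2) :
    rk {α, β, γ} ≤ 2 := by
  exact stmt_9_general hA2 hA3 (fun p ↦ (hA4 p).le) hABC hA'B'C' hncop.ge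
    hα.le hα'.le hβ.le hβ'.le hγ.le hγ'.le
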